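/- Let G be a connected unicyclic graph such that J_G is unmixed. Then G = C_l ∪ (P_1 ∪ ⋯ ∪ P_r) for some 0 ≤ r ≤ l, where C_l is a cycle of length l, each P_i is a path graph with |V(P_i) ∩ V(C_l)| = 1, and |V(P_i) ∩ V(P_j)| = 0 for all i ≠ j. -/

import Mathlib

open MvPolynomial

noncomputable section

/-- The binomial edge ideal of a simple graph `G` on vertex type `V`, inside the
polynomial ring `K[x_i, y_i : i ∈ V]`, modelled as `MvPolynomial (V ⊕ V) K`
with `x_i = X (Sum.inl i)` and `y_i = X (Sum.inr i)`. -/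
def binomialEdgeIdeal (K : Type*) [Field K] {V : Type*} (G : SimpleGraph V) :
    Ideal (MvPolynomial (V ⊕ V) K) :=
  Ideal.span { f | ∃ i j : V, G.Adj i j ∧
    f = X (Sum.inl i) * X (Sum.inr j) - X (Sum.inl j) * X (Sum.inr i) }

/-- The minimal number of generators of an ideal. -/
def mu {R : Type*} [CommRing R] (J : Ideal R) : ℕ :=
  sInf {k | ∃ s : Finset R, s.card = k ∧ Ideal.span (s : Set R) = J}

/-- The height of an ideal: the infimum of the heights of the primes containing it. -/
def htI {R : Type*} [CommRing R] (I : Ideal R) : ℕ∞ :=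
  ⨅ (P : PrimeSpectrum R) (_ : I ≤ P.asIdeal), Order.height P

/-- An ideal is unmixed if all of its minimal primes have height equal to its height. -/
def IsUnmixed {R : Type*} [CommRing R] (I : Ideal R) : Prop :=
  ∀ P ∈ I.minimalPrimes, htI P = htI I

/-- The depth of a ring `R` with respect to an ideal `m`: the supremum of the
lengths of regular sequences on `R` consisting of elements of `m`. -/
def ringDepth (R : Type*) [CommRing R] (m : Ideal R) : ℕ∞ :=
  sSup {d : ℕ∞ | ∃ l : List R, (l.length : ℕ∞) = d ∧ (∀ x ∈ l, x ∈ m) ∧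
    RingTheory.Sequence.IsRegular R l}

/-- The graded maximal ideal of the quotient of a polynomial ring by an ideal `J`:
the image of the ideal generated by all the variables. -/
def gradedMaxQuot {K σ : Type*} [Field K] (J : Ideal (MvPolynomial σ K)) :
    Ideal (MvPolynomial σ K ⧸ J) :=
  (Ideal.span (Set.range (X : σ → MvPolynomial σ K))).map (Ideal.Quotient.mk J)

/-- `S/J` is Cohen–Macaulay: its depth with respect to the graded maximal ideal
equals its Krull dimension. -/
def IsCMQuot {K σ : Type*} [Field K] (J : Ideal (MvPolynomial σ K)) : Prop :=
  (ringDepth (MvPolynomial σ K ⧸ J) (gradedMaxQuot J) : WithBot ℕ∞) =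
    ringKrullDim (MvPolynomial σ K ⧸ J)

/-- A graph is a path graph if its vertices can be ordered `v_1, …, v_m` so that
its edges are exactly `{v_i, v_{i+1}}` for `1 ≤ i ≤ m - 1`. -/
def IsPathGraph {V : Type*} (H : SimpleGraph V) : Prop :=
  ∃ (m : ℕ) (e : V ≃ Fin m), ∀ a b : V,
    H.Adj a b ↔ ((e a : ℕ) + 1 = (e b : ℕ) ∨ (e b : ℕ) + 1 = (e a : ℕ))

/-- The vertex set of a connected component, as a set of vertices. -/
def compSupp {V : Type*} (G : SimpleGraph V) (c : G.ConnectedComponent) : Set V :=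
  {v | G.connectedComponentMk v = c}

end

noncomputable section

/-- A graph is a cycle graph of length `l` if its vertices can be arranged in a
cyclic order `v_1, …, v_l` so that its edges are exactly the consecutive ones
(indices mod `l`). -/
def IsCycleGraphOfLength {V : Type*} (H : SimpleGraph V) (l : ℕ) : Prop :=
  ∃ e : V ≃ Fin l, ∀ a b : V,
    H.Adj a b ↔ (((e a : ℕ) + 1) % l = (e b : ℕ) ∨ ((e b : ℕ) + 1) % l = (e a : ℕ))

/-- The binomial `x_i y_j - x_j y_i` attached to a pair of vertices. -/
def edgeBinomial (K : Type*) [Field K] {V : Type*} (i j : V) : MvPolynomial (V ⊕ V) K :=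
  X (Sum.inl i) * X (Sum.inr j) - X (Sum.inl j) * X (Sum.inr i)

open Classical in
/-- The homomorphism killing `x_i` and `y_i` for `i ∈ D`, and sending `x_i ↦ t_i`,
`y_i ↦ t_i b_{ρ i}` for the other `i`. Its kernel is generated by the variables with index in `D`
and the binomials of all pairs on which `ρ` agrees. -/
def paramHom (K : Type*) [Field K] {V : Type*} (D : Set V) (ρ : V → V) :
    MvPolynomial (V ⊕ V) K →ₐ[K] MvPolynomial (V ⊕ V) K :=
  aeval (Sum.elim (fun i => if i ∈ D then 0 else X (Sum.inl i))
    (fun i => if i ∈ D then 0 else X (Sum.inl i) * X (Sum.inr (ρ i))))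

section Algebra

variable {K : Type*} [Field K] {V : Type*}

lemma paramHom_inl_of_mem {D : Set V} (ρ : V → V) {i : V} (hi : i ∈ D) :
    paramHom K D ρ (X (Sum.inl i)) = 0 := by
  simp [paramHom, hi]

lemma paramHom_inr_of_mem {D : Set V} (ρ : V → V) {i : V} (hi : i ∈ D) :
    paramHom K D ρ (X (Sum.inr i)) = 0 := by
  simp [paramHom, hi]

lemma paramHom_inl_of_notMem {D : Set V} (ρ : V → V) {i : V} (hi : i ∉ D) :
    paramHom K D ρ (X (Sum.inl i)) = X (Sum.inl i) := by
  simp [paramHom, hi]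

lemma paramHom_inr_of_notMem {D : Set V} (ρ : V → V) {i : V} (hi : i ∉ D) :
    paramHom K D ρ (X (Sum.inr i)) = X (Sum.inl i) * X (Sum.inr (ρ i)) := by
  simp [paramHom, hi]

lemma X_inl_notMem_ker_paramHom {D : Set V} (ρ : V → V) {i : V} (hi : i ∉ D) :
    (X (Sum.inl i) : MvPolynomial (V ⊕ V) K) ∉ RingHom.ker (paramHom K D ρ) := by
  rw [RingHom.mem_ker, paramHom_inl_of_notMem ρ hi]
  exact X_ne_zero _

lemma edgeBinomial_mem_ker_paramHom {D : Set V} {ρ : V → V} {i j : V}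
    (h : i ∉ D → j ∉ D → ρ i = ρ j) :
    edgeBinomial K i j ∈ RingHom.ker (paramHom K D ρ) := by
  rw [RingHom.mem_ker, edgeBinomial, map_sub, map_mul, map_mul]
  by_cases hi : i ∈ D
  · simp [paramHom_inl_of_mem ρ hi, paramHom_inr_of_mem ρ hi]
  by_cases hj : j ∈ D
  · simp [paramHom_inl_of_mem ρ hj, paramHom_inr_of_mem ρ hj]
  rw [paramHom_inl_of_notMem ρ hi, paramHom_inr_of_notMem ρ hi, paramHom_inl_of_notMem ρ hj,
    paramHom_inr_of_notMem ρ hj, h hi hj]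
  ring

lemma edgeBinomial_notMem_ker_paramHom {D : Set V} {ρ : V → V} {i j : V}
    (hi : i ∉ D) (hj : j ∉ D) (h : ρ i ≠ ρ j) :
    edgeBinomial K i j ∉ RingHom.ker (paramHom K D ρ) := by
  rw [RingHom.mem_ker, edgeBinomial, map_sub, map_mul, map_mul,
    paramHom_inl_of_notMem ρ hi, paramHom_inr_of_notMem ρ hi, paramHom_inl_of_notMem ρ hj,
    paramHom_inr_of_notMem ρ hj]
  have key : (X (Sum.inl i) * (X (Sum.inl j) * X (Sum.inr (ρ j))) -
      X (Sum.inl j) * (X (Sum.inl i) * X (Sum.inr (ρ i))) : MvPolynomial (V ⊕ V) K) =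
      X (Sum.inl i) * X (Sum.inl j) * (X (Sum.inr (ρ j)) - X (Sum.inr (ρ i))) := by ring
  rw [key]
  refine mul_ne_zero (mul_ne_zero (X_ne_zero _) (X_ne_zero _)) (sub_ne_zero.mpr fun h' => h ?_)
  exact (Sum.inr_injective (X_injective h')).symm

lemma binomialEdgeIdeal_le_ker_paramHom {G : SimpleGraph V} {D : Set V} {ρ : V → V}
    (h : ∀ i j, G.Adj i j → i ∉ D → j ∉ D → ρ i = ρ j) :
    binomialEdgeIdeal K G ≤ RingHom.ker (paramHom K D ρ) := by
  refine Ideal.span_le.mpr ?_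
  rintro f ⟨i, j, hij, rfl⟩
  exact edgeBinomial_mem_ker_paramHom (h i j hij)

/-- A prime inside `ker (paramHom K D ρ)` containing the variables indexed by `D` and the
binomials joining each vertex to its representative is the whole kernel. -/
lemma ker_paramHom_le_of_isPrime {D : Set V} {ρ : V → V} (hρ : ∀ i ∉ D, ρ i ∉ D)
    {P : Ideal (MvPolynomial (V ⊕ V) K)} [P.IsPrime]
    (hP : P ≤ RingHom.ker (paramHom K D ρ))
    (hx : ∀ i ∈ D, X (Sum.inl i) ∈ P) (hy : ∀ i ∈ D, X (Sum.inr i) ∈ P)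
    (hf : ∀ i ∉ D, edgeBinomial K (ρ i) i ∈ P) :
    RingHom.ker (paramHom K D ρ) ≤ P := by
  let L := FractionRing (MvPolynomial (V ⊕ V) K ⧸ P)
  let q : MvPolynomial (V ⊕ V) K →ₐ[K] L :=
    (IsScalarTower.toAlgHom K (MvPolynomial (V ⊕ V) K ⧸ P) L).comp (Ideal.Quotient.mkₐ K P)
  have hq : ∀ f, q f = 0 ↔ f ∈ P := fun f => by
    simp only [q, AlgHom.comp_apply, IsScalarTower.coe_toAlgHom', Ideal.Quotient.mkₐ_eq_mk]
    rw [FaithfulSMul.algebraMap_eq_zero_iff, Ideal.Quotient.eq_zero_iff_mem]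
  let ψ : MvPolynomial (V ⊕ V) K →ₐ[K] L :=
    aeval (Sum.elim (fun i => q (X (Sum.inl i)))
      (fun i => q (X (Sum.inr i)) / q (X (Sum.inl i))))
  have hfac : q = ψ.comp (paramHom K D ρ) := by
    refine algHom_ext fun s => ?_
    rcases s with i | i
    · by_cases hi : i ∈ D
      · simp [paramHom_inl_of_mem ρ hi, (hq _).mpr (hx i hi)]
      · simp [paramHom_inl_of_notMem ρ hi, ψ]
    · by_cases hi : i ∈ D
      · simp [paramHom_inr_of_mem ρ hi, (hq _).mpr (hy i hi)]
      · have h0 : q (X (Sum.inl (ρ i))) ≠ 0 := fun h =>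
          X_inl_notMem_ker_paramHom ρ (hρ i hi) (hP ((hq _).mp h))
        have h1 := (hq _).mpr (hf i hi)
        rw [edgeBinomial, map_sub, map_mul, map_mul] at h1
        simp only [AlgHom.comp_apply, paramHom_inr_of_notMem ρ hi, map_mul, ψ, aeval_X,
          Sum.elim_inl, Sum.elim_inr]
        rw [mul_div_assoc', eq_div_iff h0]
        linear_combination h1
  intro g hg
  rw [← hq, hfac, AlgHom.comp_apply, (RingHom.mem_ker).mp hg, map_zero]

lemma edgeBinomial_mem_of_reachable {G : SimpleGraph V} {P : Ideal (MvPolynomial (V ⊕ V) K)}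
    [P.IsPrime] (hP : binomialEdgeIdeal K G ≤ P) (hx : ∀ i, X (Sum.inl i) ∉ P) {i j : V}
    (h : G.Reachable i j) : edgeBinomial K i j ∈ P := by
  obtain ⟨p⟩ := h
  induction p with
  | nil => simp [edgeBinomial]
  | @cons u v w huv p ih =>
    have huv_mem : edgeBinomial K u v ∈ P := hP (Ideal.subset_span ⟨u, v, huv, rfl⟩)
    have key : X (Sum.inl v) * edgeBinomial K u w =
        X (Sum.inl u) * edgeBinomial K v w + X (Sum.inl w) * edgeBinomial K u v := by
      simp only [edgeBinomial]; ring
    refine (Ideal.IsPrime.mem_or_mem ‹P.IsPrime› ?_).resolve_left (hx v)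
    rw [key]
    exact add_mem (P.mul_mem_left _ ih) (P.mul_mem_left _ huv_mem)

/-- For a connected graph, the ideal of all maximal minors is a minimal prime of the binomial edge
ideal. -/
lemma ker_paramHom_mem_minimalPrimes {G : SimpleGraph V} (hG : G.Connected) (o : V) :
    RingHom.ker (paramHom K (∅ : Set V) fun _ => o) ∈ (binomialEdgeIdeal K G).minimalPrimes := by
  refine ⟨⟨RingHom.ker_isPrime _, binomialEdgeIdeal_le_ker_paramHom (by simp)⟩, ?_⟩
  rintro P ⟨hP, hJ⟩ hle
  refine ker_paramHom_le_of_isPrime (by simp) hle (by simp) (by simp) fun i _ => ?_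
  exact edgeBinomial_mem_of_reachable hJ
    (fun i hi => X_inl_notMem_ker_paramHom _ (Set.notMem_empty i) (hle hi)) (hG o i)

lemma htI_asIdeal {R : Type*} [CommRing R] (P : PrimeSpectrum R) :
    htI P.asIdeal = Order.height P :=
  le_antisymm (iInf₂_le P le_rfl) (le_iInf₂ fun _ hQ => Order.height_mono hQ)

/-- The kernel of `paramHom`, as a point of the spectrum. -/
def kerParam (K : Type*) [Field K] {V : Type*} (D : Set V) (ρ : V → V) :
    PrimeSpectrum (MvPolynomial (V ⊕ V) K) :=
  ⟨RingHom.ker (paramHom K D ρ), RingHom.ker_isPrime _⟩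

lemma ker_paramHom_le_of_comp (D : Set V) (ρ σ : V → V) :
    RingHom.ker (paramHom K D ρ) ≤ RingHom.ker (paramHom K D (σ ∘ ρ)) := by
  have hfac : paramHom K D (σ ∘ ρ) =
      (rename (Sum.map id σ)).comp (paramHom K D ρ) := by
    refine algHom_ext fun s => ?_
    rcases s with i | i <;> by_cases hi : i ∈ D
    · simp [paramHom_inl_of_mem _ hi]
    · simp [paramHom_inl_of_notMem _ hi]
    · simp [paramHom_inr_of_mem _ hi]
    · simp [paramHom_inr_of_notMem _ hi]
  intro g hg
  rw [RingHom.mem_ker, hfac, AlgHom.comp_apply, (RingHom.mem_ker).mp hg, map_zero]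

/-- The ideal of maximal minors of the generic `2 × (m + 1)` matrix has height at least `m`. -/
lemma le_height_kerParam_const (K : Type*) [Field K] (m : ℕ) :
    (m : ℕ∞) ≤ Order.height (kerParam K (∅ : Set (Fin (m + 1))) fun _ => 0) := by
  have main : ∀ k ≤ m, (k : ℕ∞) ≤ Order.height (kerParam K (∅ : Set (Fin (m + 1)))
      fun i => if (i : ℕ) ≤ k then 0 else i) := by
    intro k
    induction k with
    | zero => simp
    | succ k ih =>
      intro hk
      rw [Nat.cast_succ]
      refine (add_le_add_left (ih (by lia)) 1).trans (Order.height_add_one_le ?_)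
      refine lt_of_le_of_ne ?_ fun heq => ?_
      · have hcomp : (fun i : Fin (m + 1) => if (i : ℕ) ≤ k + 1 then (0 : Fin (m + 1)) else i) =
            (fun i : Fin (m + 1) => if (i : ℕ) ≤ k + 1 then (0 : Fin (m + 1)) else i) ∘
              (fun i : Fin (m + 1) => if (i : ℕ) ≤ k then (0 : Fin (m + 1)) else i) := by
          funext i
          simp only [Function.comp_apply]
          split_ifs <;> simp_all
          lia
        rw [hcomp]
        exact ker_paramHom_le_of_comp _ _ _
      · let j : Fin (m + 1) := ⟨k + 1, by lia⟩
        have h1 : edgeBinomial K 0 j ∈ RingHom.ker (paramHom K (∅ : Set (Fin (m + 1)))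
            fun i => if (i : ℕ) ≤ k + 1 then 0 else i) :=
          edgeBinomial_mem_ker_paramHom (by simp [j])
        have h2 : edgeBinomial K 0 j ∉ RingHom.ker (paramHom K (∅ : Set (Fin (m + 1)))
            fun i => if (i : ℕ) ≤ k then 0 else i) :=
          edgeBinomial_notMem_ker_paramHom (by simp) (by simp) (by simp [j])
        exact h2 ((congrArg PrimeSpectrum.asIdeal heq).ge h1)
  have hfun : (fun i : Fin (m + 1) => if (i : ℕ) ≤ m then (0 : Fin (m + 1)) else i) =
      fun _ => 0 := by
    funext i
    rw [if_pos (Nat.lt_succ_iff.mp i.isLt)]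
  simpa only [hfun] using main m le_rfl

/-- If deleting `v` leaves the three vertices `a`, `b`, `c` in different parts of a partition without
edges between parts, then the associated prime is minimal over an ideal with `|V| - 2` generators. -/
lemma height_kerParam_add_two_le [Fintype V] {v a b c : V} {ρ : V → V}
    (hva : v ≠ a) (hvb : v ≠ b) (hvc : v ≠ c) (hab : a ≠ b) (hac : a ≠ c) (hbc : b ≠ c)
    (hρ : ∀ i, ρ i = a ∨ ρ i = b ∨ ρ i = c) (ha : ρ a = a) (hb : ρ b = b) (hc : ρ c = c) :
    Order.height (kerParam K {v} ρ) + 2 ≤ Fintype.card V := by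
  classical
  have hcard : ({v, a, b, c} : Finset V).card = 4 := by
    simp [Finset.card_insert_of_notMem, *]
  let s : Finset (MvPolynomial (V ⊕ V) K) :=
    {X (Sum.inl v), X (Sum.inr v)} ∪
      (Finset.univ \ {v, a, b, c}).image fun i => edgeBinomial K (ρ i) i
  have hs : s.card + 2 ≤ Fintype.card V := by
    have h1 : s.card ≤ 2 + (Finset.univ \ {v, a, b, c} : Finset V).card :=
      (Finset.card_union_le _ _).trans (add_le_add Finset.card_le_two Finset.card_image_le)
    have h2 := Finset.card_sdiff_add_card_eq_card (Finset.subset_univ ({v, a, b, c} : Finset V))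
    rw [hcard, Finset.card_univ] at h2
    lia
  have hmin : RingHom.ker (paramHom K {v} ρ) ∈ (Ideal.span (s : Set _)).minimalPrimes := by
    refine ⟨⟨RingHom.ker_isPrime _, Ideal.span_le.mpr fun f hf => ?_⟩, ?_⟩
    · simp only [s, Finset.coe_union, Finset.coe_image, Set.mem_union, Finset.mem_coe,
        Finset.mem_insert, Finset.mem_singleton, Set.mem_image] at hf
      rcases hf with (rfl | rfl) | ⟨i, -, rfl⟩
      · exact paramHom_inl_of_mem ρ rfl
      · exact paramHom_inr_of_mem ρ rfl
      · refine edgeBinomial_mem_ker_paramHom fun _ _ => ?_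
        rcases hρ i with h | h | h <;> rw [h] <;> assumption
    · rintro P ⟨hP, hsP⟩ hle
      have hsP' : ∀ f ∈ s, f ∈ P := fun f hf => hsP (Ideal.subset_span hf)
      refine ker_paramHom_le_of_isPrime (fun i _ => ?_) hle ?_ ?_ fun i hi => ?_
      · rcases hρ i with h | h | h <;> rw [h] <;> simp [Ne.symm, *]
      · rintro i rfl
        exact hsP' _ (by simp [s])
      · rintro i rfl
        exact hsP' _ (by simp [s])
      · by_cases hi' : i = a ∨ i = b ∨ i = c
        · have : ρ i = i := by rcases hi' with rfl | rfl | rfl <;> assumption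
          simp [edgeBinomial, this]
        · refine hsP' _ (Finset.mem_union_right _ (Finset.mem_image_of_mem _ ?_))
          simp only [Set.mem_singleton_iff] at hi
          simp [hi, hi']
  have hht := Ideal.height_le_card_of_mem_minimalPrimes_span_finset hmin
  have hht' : Order.height (kerParam K {v} ρ) ≤ s.card := by
    rw [← PrimeSpectrum.height_eq_orderHeight]
    exact hht
  calc Order.height (kerParam K {v} ρ) + 2 ≤ (s.card : ℕ∞) + 2 := by gcongr
    _ ≤ Fintype.card V := by exact_mod_cast hs

/-- If `J_G` is unmixed, deleting a vertex of a connected graph `G` leaves at most two components: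
there is no partition of the remaining vertices into three nonempty parts without edges between
them. -/
lemma false_of_isUnmixed_of_three_parts {n : ℕ} {G : SimpleGraph (Fin n)} (hG : G.Connected)
    (hU : IsUnmixed (binomialEdgeIdeal K G)) {v a b c : Fin n} {ρ : Fin n → Fin n}
    (hva : v ≠ a) (hvb : v ≠ b) (hvc : v ≠ c) (hab : a ≠ b) (hac : a ≠ c) (hbc : b ≠ c)
    (hρ : ∀ i, ρ i = a ∨ ρ i = b ∨ ρ i = c) (ha : ρ a = a) (hb : ρ b = b) (hc : ρ c = c)
    (hadj : ∀ i j, G.Adj i j → i ≠ v → j ≠ v → ρ i = ρ j) : False := by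
  obtain _ | m := n
  · exact v.elim0
  have h1 := le_height_kerParam_const K m
  rw [← htI_asIdeal] at h1
  have h2 : htI (kerParam K (∅ : Set (Fin (m + 1))) fun _ => 0).asIdeal =
      htI (binomialEdgeIdeal K G) := hU _ (ker_paramHom_mem_minimalPrimes hG 0)
  have h3 : htI (binomialEdgeIdeal K G) ≤ Order.height (kerParam K {v} ρ) :=
    iInf₂_le (kerParam K {v} ρ) (binomialEdgeIdeal_le_ker_paramHom hadj)
  have h4 := height_kerParam_add_two_le (K := K) hva hvb hvc hab hac hbc hρ ha hb hc
  rw [Fintype.card_fin] at h4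
  have h5 : ((m : ℕ∞) + 2) ≤ ((m + 1 : ℕ) : ℕ∞) :=
    (add_le_add_left ((h1.trans h2.le).trans h3) 2).trans h4
  have : m + 2 ≤ m + 1 := by exact_mod_cast h5
  lia

end Algebra

section Graph

variable {V : Type*}

/-- A vertex of `G` with three neighbours, two of them joined to it by bridges, contradicts
unmixedness. -/
lemma false_of_isUnmixed_of_bridges {K : Type*} [Field K] {n : ℕ} {G : SimpleGraph (Fin n)}
    (hG : G.Connected) (hU : IsUnmixed (binomialEdgeIdeal K G)) {v a b c : Fin n}
    (hva : G.Adj v a) (hvb : G.Adj v b) (hvc : G.Adj v c)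
    (hab : a ≠ b) (hac : a ≠ c) (hbc : b ≠ c)
    (ba : G.IsBridge s(v, a)) (bb : G.IsBridge s(v, b)) : False := by
  classical
  let A : Fin n → Prop := fun i => (G.deleteEdges {s(v, a)}).Reachable v i
  let B : Fin n → Prop := fun i => (G.deleteEdges {s(v, b)}).Reachable v i
  have hAadj : ∀ i j, G.Adj i j → i ≠ v → j ≠ v → (A i ↔ A j) := fun i j hij hi hj => by
    have h : (G.deleteEdges {s(v, a)}).Adj i j := by
      simp only [SimpleGraph.deleteEdges_adj, Set.mem_singleton_iff]; grind
    exact ⟨fun h' => h'.trans h.reachable, fun h' => h'.trans h.symm.reachable⟩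
  have hBadj : ∀ i j, G.Adj i j → i ≠ v → j ≠ v → (B i ↔ B j) := fun i j hij hi hj => by
    have h : (G.deleteEdges {s(v, b)}).Adj i j := by
      simp only [SimpleGraph.deleteEdges_adj, Set.mem_singleton_iff]; grind
    exact ⟨fun h' => h'.trans h.reachable, fun h' => h'.trans h.symm.reachable⟩
  have hA : ∀ i, G.Adj v i → i ≠ a → A i := fun i hi hia => by
    refine SimpleGraph.Adj.reachable ?_
    simp only [SimpleGraph.deleteEdges_adj, Set.mem_singleton_iff]; grind
  have hB : ∀ i, G.Adj v i → i ≠ b → B i := fun i hi hib => by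
    refine SimpleGraph.Adj.reachable ?_
    simp only [SimpleGraph.deleteEdges_adj, Set.mem_singleton_iff]; grind
  have hAa : ¬ A a := ba
  have hBb : ¬ B b := bb
  refine false_of_isUnmixed_of_three_parts hG hU (v := v) (a := a) (b := b) (c := c)
    (ρ := fun i => if A i then (if B i then c else b) else a)
    hva.ne hvb.ne hvc.ne hab hac hbc (fun i => ?_) ?_ ?_ ?_ fun i j hij hi hj => ?_
  · split_ifs <;> simp
  · simp [hAa]
  · simp [hBb, hA b hvb hab.symm]
  · simp [hA c hvc hac.symm, hB c hvc hbc.symm]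
  · simp only [hAadj i j hij hi hj, hBadj i j hij hi hj]

/-- In a connected graph with as many edges as vertices, every edge off a given cycle is a
bridge. -/
lemma isBridge_of_notMem_cycle [Finite V] {G : SimpleGraph V} (hG : G.Connected)
    (hE : G.edgeSet.ncard = Nat.card V) {u : V} {c : G.Walk u u} (hc : c.IsCycle)
    {e : Sym2 V} (heG : e ∈ G.edgeSet) (he : e ∉ c.edges) : G.IsBridge e := by
  by_contra hb
  induction e with | h x y
  have h1 := hG.connected_delete_edge_of_not_isBridge hb
  let c' := c.toDeleteEdge s(x, y) he
  have hc' : c'.IsCycle := hc.toDeleteEdges _ _ _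
  obtain ⟨f, hf⟩ := List.exists_mem_of_ne_nil c'.edges (by
    intro h
    have := hc'.three_le_length
    rw [← c'.length_edges, h] at this
    simp at this)
  have hfE := c'.edges_subset_edgeSet hf
  have hfb : ¬ (G.deleteEdges {s(x, y)}).IsBridge f := fun h =>
    h.notMem_edges_of_isCycle hc' hf
  induction f with | h z w
  have h2 := (h1.connected_delete_edge_of_not_isBridge hfb).card_vert_le_card_edgeSet_add_one
  rw [Nat.card_coe_set_eq, SimpleGraph.edgeSet_deleteEdges,
    Set.ncard_sdiff_singleton_of_mem hfE] at h2
  rw [SimpleGraph.edgeSet_deleteEdges] at h2 hfE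
  rw [Set.ncard_sdiff_singleton_of_mem heG] at h2
  have h3 : 2 ≤ G.edgeSet.ncard := by
    refine (Set.one_lt_ncard_iff (Set.toFinite _)).mpr ⟨s(x, y), s(z, w), heG, hfE.1, ?_⟩
    exact fun h => hfE.2 h.symm
  lia

/-- Two distinct vertices of a subgraph are not joined by a walk avoiding its edges, if the edges
off the subgraph are bridges and the subgraph is connected. -/
lemma eq_of_reachable_off_subgraph {G : SimpleGraph V} {C : G.Subgraph} (hC : C.Connected)
    (hb : ∀ e ∈ G.edgeSet, e ∉ C.edgeSet → G.IsBridge e) {z w : V} (hz : z ∈ C.verts)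
    (hw : w ∈ C.verts) (h : (G.deleteEdges C.edgeSet).Reachable z w) : z = w := by
  obtain ⟨p, hp⟩ := h.exists_isPath
  cases p with
  | nil => rfl
  | @cons _ x _ hzx p =>
    exfalso
    rw [SimpleGraph.Walk.cons_isPath_iff] at hp
    rw [SimpleGraph.deleteEdges_adj] at hzx
    refine hb s(z, x) hzx.1 hzx.2 ?_
    have h1 : (G.deleteEdges {s(z, x)}).Reachable x w := by
      have he : s(z, x) ∉ p.edges := fun h => hp.2 (p.fst_mem_support_of_mem_edges h)
      refine (p.toDeleteEdge _ he).reachable.mono ?_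
      exact SimpleGraph.deleteEdges_mono (SimpleGraph.deleteEdges_le _)
    have h2 : (G.deleteEdges {s(z, x)}).Reachable z w := by
      have hle : C.spanningCoe ≤ G.deleteEdges {s(z, x)} := fun i j hij => by
        rw [SimpleGraph.deleteEdges_adj]
        refine ⟨hij.adj_sub, fun h => hzx.2 ?_⟩
        rw [← Set.mem_singleton_iff.mp h]
        exact hij
      let φ : C.coe →g G.deleteEdges {s(z, x)} := ⟨Subtype.val, fun h => hle h⟩
      exact (hC.coe ⟨z, hz⟩ ⟨w, hw⟩).map φ
    exact h2.trans h1.symm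

end Graph

section PathComponent

variable {V : Type*} {H : SimpleGraph V} {z : V}

lemma exists_adj_dist_eq_of_dist_eq_succ {w : V} {d : ℕ} (h : H.dist z w = d + 1) :
    ∃ u, H.Adj u w ∧ H.Reachable z u ∧ H.dist z u = d := by
  obtain ⟨p, hp⟩ := SimpleGraph.exists_walk_of_dist_ne_zero (G := H) (u := z) (v := w) (by lia)
  have hnil : ¬ p.Nil := fun hn => by
    have := SimpleGraph.Walk.length_eq_zero_iff.mpr hn
    lia
  have hadj := p.adj_penultimate hnil
  refine ⟨p.penultimate, hadj, p.dropLast.reachable, ?_⟩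
  have h1 := SimpleGraph.dist_le p.dropLast
  have h2 := p.dropLast.reachable.dist_triangle_left w
  rw [SimpleGraph.dist_eq_one_iff_adj.mpr hadj] at h2
  have h3 : p.dropLast.length = p.length - 1 := by simp
  lia

/-- If the component of `z` has maximal degree at most two and `z` has degree at most one, then
vertices of the component are determined by their distance to `z`. -/
lemma eq_of_dist_eq_of_degree_le
    (hz : ∀ a b, H.Adj z a → H.Adj z b → a = b)
    (hdeg : ∀ w, H.Reachable z w → ∀ a b c, H.Adj w a → H.Adj w b → H.Adj w c →
      a = b ∨ a = c ∨ b = c) (d : ℕ) :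
    ∀ u w, H.Reachable z u → H.Reachable z w → H.dist z u = d → H.dist z w = d → u = w := by
  induction d with
  | zero =>
    intro u w hu hw du dw
    rw [← hu.dist_eq_zero_iff.mp du, ← hw.dist_eq_zero_iff.mp dw]
  | succ d ih =>
    intro u w hu hw du dw
    obtain ⟨u', hu', ru, du'⟩ := exists_adj_dist_eq_of_dist_eq_succ du
    obtain ⟨w', hw', rw', dw'⟩ := exists_adj_dist_eq_of_dist_eq_succ dw
    obtain rfl := ih u' w' ru rw' du' dw'
    obtain _ | d := d
    · obtain rfl := ru.dist_eq_zero_iff.mp du'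
      exact hz u w hu' hw'
    · obtain ⟨t, ht, -, dt⟩ := exists_adj_dist_eq_of_dist_eq_succ du'
      rcases hdeg u' ru u w t hu' hw' ht.symm with h | h | h
      · exact h
      · subst h; lia
      · subst h; lia

lemma exists_dist_eq_of_le {w : V} (hw : H.Reachable z w) {d : ℕ} (hd : d ≤ H.dist z w) :
    ∃ u, H.Reachable z u ∧ H.dist z u = d := by
  induction h : H.dist z w - d generalizing w with
  | zero => exact ⟨w, hw, by lia⟩
  | succ k ih =>
    obtain ⟨u, -, hu, du⟩ := exists_adj_dist_eq_of_dist_eq_succ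
      (H := H) (z := z) (w := w) (d := H.dist z w - 1) (by lia)
    exact ih hu (by lia) (by lia)

/-- A component with maximal degree at most two containing a vertex of degree at most one is a
path. -/
lemma isPathGraph_induce_reachable [Finite V]
    (hz : ∀ a b, H.Adj z a → H.Adj z b → a = b)
    (hdeg : ∀ w, H.Reachable z w → ∀ a b c, H.Adj w a → H.Adj w b → H.Adj w c →
      a = b ∨ a = c ∨ b = c) :
    IsPathGraph (H.induce {w | H.Reachable z w}) := by
  classical
  let T := {w | H.Reachable z w}
  have := Fintype.ofFinite T
  have hinj := eq_of_dist_eq_of_degree_le hz hdeg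
  have hlt : ∀ w : T, H.dist z w < Fintype.card T := fun w => by
    choose g hg hgd using fun d : Fin (H.dist z w + 1) =>
      exists_dist_eq_of_le w.2 (Nat.lt_succ_iff.mp d.isLt)
    have hginj : Function.Injective fun d => (⟨g d, hg d⟩ : T) := fun d d' h => by
      have : g d = g d' := congrArg Subtype.val h
      exact Fin.ext (by rw [← hgd d, ← hgd d', this])
    simpa using Fintype.card_le_of_injective _ hginj
  let F : T → Fin (Fintype.card T) := fun w => ⟨H.dist z w, hlt w⟩
  have hF : Function.Bijective F := by
    rw [Fintype.bijective_iff_injective_and_card]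
    refine ⟨fun u w h => Subtype.ext ?_, by simp⟩
    exact hinj _ u w u.2 w.2 rfl (congrArg Fin.val h).symm
  refine ⟨Fintype.card T, Equiv.ofBijective F hF, fun a b => ?_⟩
  have hadj : ∀ a b : T, H.dist z a + 1 = H.dist z b → H.Adj a b := fun a b h => by
    obtain ⟨u, hu, ru, du⟩ := exists_adj_dist_eq_of_dist_eq_succ h.symm
    rwa [hinj _ u a ru a.2 du rfl] at hu
  simp only [Equiv.ofBijective_apply, F, SimpleGraph.comap_adj, Function.Embedding.subtype_apply]
  constructor
  · intro h
    have hne : H.dist z a ≠ H.dist z b := fun h' => h.ne (hinj _ a b a.2 b.2 rfl h'.symm)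
    have h1 := a.2.dist_triangle_left (b : V)
    have h2 := b.2.dist_triangle_left (a : V)
    rw [SimpleGraph.dist_eq_one_iff_adj.mpr h] at h1
    rw [SimpleGraph.dist_eq_one_iff_adj.mpr h.symm] at h2
    lia
  · rintro (h | h)
    · exact hadj a b h
    · exact (hadj b a h).symm

end PathComponent

/-- The subgraph traced by a cycle of length `l` is a cycle graph of length `l`. -/
lemma isCycleGraphOfLength_toSubgraph {V : Type*} {G : SimpleGraph V} {u : V} {c : G.Walk u u}
    (hc : c.IsCycle) : IsCycleGraphOfLength c.toSubgraph.coe c.length := by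
  have hl := hc.three_le_length
  let f : Fin c.length → c.toSubgraph.verts := fun i =>
    ⟨c.getVert i, c.mem_verts_toSubgraph.mpr (c.getVert_mem_support i)⟩
  have hf : Function.Bijective f := by
    refine ⟨fun i j h => Fin.ext (hc.getVert_injOn' ?_ ?_ (congrArg Subtype.val h)), ?_⟩
    · show (i : ℕ) ≤ c.length - 1
      lia
    · show (j : ℕ) ≤ c.length - 1
      lia
    · rintro ⟨v, hv⟩
      rw [c.mem_verts_toSubgraph, SimpleGraph.Walk.mem_support_iff_exists_getVert] at hv
      obtain ⟨i, rfl, hi⟩ := hv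
      rcases hi.lt_or_eq with hi | rfl
      · exact ⟨⟨i, hi⟩, rfl⟩
      · exact ⟨⟨0, by lia⟩, Subtype.ext (by simp [f])⟩
  let e := Equiv.ofBijective f hf
  have hmod : ∀ i, i < c.length → c.getVert (i + 1) = c.getVert ((i + 1) % c.length) :=
    fun i hi => by
      rcases (Nat.succ_le_of_lt hi).lt_or_eq with h | h
      · rw [Nat.mod_eq_of_lt h]
      · have h' : i + 1 = c.length := h
        simp [h']
  have hinj : ∀ i j, i < c.length → j < c.length → c.getVert i = c.getVert j → i = j :=
    fun i j hi hj h => by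
      have := hf.1 (a₁ := ⟨i, hi⟩) (a₂ := ⟨j, hj⟩) (Subtype.ext h)
      exact congrArg Fin.val this
  refine ⟨e.symm, fun a b => ?_⟩
  obtain ⟨i, rfl⟩ := e.surjective a
  obtain ⟨j, rfl⟩ := e.surjective b
  rw [e.symm_apply_apply, e.symm_apply_apply, SimpleGraph.Subgraph.coe_adj,
    SimpleGraph.Walk.toSubgraph_adj_iff]
  have hval : ∀ k, ((e k : c.toSubgraph.verts) : V) = c.getVert k := fun _ => rfl
  have hpos : 0 < c.length := by lia
  simp only [hval]
  constructor
  · rintro ⟨k, hk, hkl⟩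
    rw [hmod k hkl, Sym2.eq_iff] at hk
    have hk' := Nat.mod_lt (k + 1) hpos
    rcases hk with ⟨h1, h2⟩ | ⟨h1, h2⟩
    · left; rw [← hinj _ _ hkl i.2 h1, hinj _ _ hk' j.2 h2]
    · right; rw [← hinj _ _ hkl j.2 h1, hinj _ _ hk' i.2 h2]
  · rintro (h | h)
    · exact ⟨i, by rw [hmod i i.2, h], i.2⟩
    · exact ⟨j, by rw [hmod j j.2, h, Sym2.eq_swap], j.2⟩

/-- The component of `z` in a spanning subgraph `H ≤ G`, as a subgraph of `G`. -/
def branch {V : Type*} {G H : SimpleGraph V} (hH : H ≤ G) (z : V) : G.Subgraph where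
  verts := {w | H.Reachable z w}
  Adj a b := H.Adj a b ∧ H.Reachable z a
  adj_sub h := hH h.1
  edge_vert h := h.2
  symm := ⟨fun _ _ h => ⟨h.1.symm, h.2.trans h.1.reachable⟩⟩

lemma branch_coe {V : Type*} {G H : SimpleGraph V} (hH : H ≤ G) (z : V) :
    (branch hH z).coe = H.induce {w | H.Reachable z w} := by
  ext a b
  exact ⟨fun h => h.1, fun h => ⟨h, a.2⟩⟩

/-- Let `G` be a connected unicyclic graph such that `J_G` is
unmixed. Then `G = C_l ∪ (P_1 ∪ ⋯ ∪ P_r)` for some `0 ≤ r ≤ l`, where `C_l` is a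
cycle of length `l`, each `P_i` is a path graph meeting `C_l` in exactly one
vertex, and the `P_i` are pairwise vertex-disjoint. -/
theorem binomialEdgeIdeal_unmixed_unicyclic_structure
    (K : Type*) [Field K] (n : ℕ) (G : SimpleGraph (Fin n))
    (hConn : G.Connected) (hUni : G.edgeSet.ncard = n)
    (hUnmixed : IsUnmixed (binomialEdgeIdeal K G)) :
    ∃ (l r : ℕ), 3 ≤ l ∧ r ≤ l ∧
      ∃ (C : G.Subgraph) (P : Fin r → G.Subgraph),
        IsCycleGraphOfLength C.coe l ∧
        (∀ i, IsPathGraph (P i).coe) ∧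
        (∀ i, ((P i).verts ∩ C.verts).ncard = 1) ∧
        (∀ i j, i ≠ j → (P i).verts ∩ (P j).verts = ∅) ∧
        C ⊔ (⨆ i, P i) = ⊤ := by
  have hcard : G.edgeSet.ncard = Nat.card (Fin n) := by simpa using hUni
  have hcyc : ∃ (u : Fin n) (c : G.Walk u u), c.IsCycle := by
    by_contra! h
    have hT : G.IsTree := ⟨hConn, fun u c => h u c⟩
    have := (SimpleGraph.isTree_iff_connected_and_card.mp hT).2
    rw [Nat.card_coe_set_eq] at this
    lia
  obtain ⟨u, c, hc⟩ := hcyc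
  let C := c.toSubgraph
  let H := G.deleteEdges C.edgeSet
  have hH : H ≤ G := SimpleGraph.deleteEdges_le _
  have hb : ∀ e ∈ G.edgeSet, e ∉ C.edgeSet → G.IsBridge e := fun e he heC =>
    isBridge_of_notMem_cycle hConn hcard hc he fun h => heC (c.mem_edges_toSubgraph.mpr h)
  have hHb : ∀ {v a}, H.Adj v a → G.Adj v a ∧ G.IsBridge s(v, a) := fun h => by
    have h' := SimpleGraph.deleteEdges_adj.mp h
    exact ⟨h'.1, hb _ h'.1 h'.2⟩
  have hdeg : ∀ w a b d, H.Adj w a → H.Adj w b → H.Adj w d → a = b ∨ a = d ∨ b = d := by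
    intro w a b d ha hb' hd
    by_contra! hne
    exact false_of_isUnmixed_of_bridges hConn hUnmixed (hHb ha).1 (hHb hb').1 (hHb hd).1
      hne.1 hne.2.1 hne.2.2 (hHb ha).2 (hHb hb').2
  have hdegC : ∀ z ∈ C.verts, ∀ a b, H.Adj z a → H.Adj z b → a = b := by
    intro z hz a b ha hb'
    by_contra hne
    obtain ⟨d, hd⟩ : ∃ d, C.Adj z d := by
      have hnt : Nontrivial C.verts := by
        obtain ⟨e, -⟩ := isCycleGraphOfLength_toSubgraph hc
        have := hc.three_le_length
        have : Nontrivial (Fin c.length) := Fin.nontrivial_iff_two_le.mpr (by lia)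
        exact e.nontrivial
      obtain ⟨d, hd⟩ := c.toSubgraph_connected.coe.preconnected.exists_adj_of_nontrivial ⟨z, hz⟩
      exact ⟨d, hd⟩
    have hnot : ∀ a, H.Adj z a → a ≠ d := by
      rintro a h rfl
      exact (SimpleGraph.deleteEdges_adj.mp h).2 hd
    exact false_of_isUnmixed_of_bridges hConn hUnmixed (hHb ha).1 (hHb hb').1 hd.adj_sub
      hne (hnot a ha) (hnot b hb') (hHb ha).2 (hHb hb').2
  have hsep : ∀ z ∈ C.verts, ∀ w ∈ C.verts, H.Reachable z w → z = w := fun z hz w hw h =>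
    eq_of_reachable_off_subgraph c.toSubgraph_connected hb hz hw h
  have hcover : ∀ w, ∃ z ∈ C.verts, H.Reachable z w := by
    intro w
    have hu : u ∈ C.verts := c.start_mem_verts_toSubgraph
    obtain ⟨p⟩ := hConn w u
    generalize u = t at p hu
    induction p with
    | nil => exact ⟨_, hu, .rfl⟩
    | @cons x y t hxy p ih =>
      by_cases hC : C.Adj x y
      · exact ⟨x, C.edge_vert hC, .rfl⟩
      · obtain ⟨z, hz, hzy⟩ := ih hu
        have : H.Adj x y := SimpleGraph.deleteEdges_adj.mpr ⟨hxy, hC⟩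
        exact ⟨z, hz, hzy.trans this.symm.reachable⟩
  obtain ⟨e, he⟩ := isCycleGraphOfLength_toSubgraph hc
  refine ⟨c.length, c.length, hc.three_le_length, le_rfl, C, fun i => branch hH (e.symm i),
    ⟨e, he⟩, fun i => ?_, fun i => ?_, fun i j hij => ?_, ?_⟩
  · rw [branch_coe]
    exact isPathGraph_induce_reachable (hdegC _ (e.symm i).2) fun w _ => hdeg w
  · rw [Set.ncard_eq_one]
    refine ⟨e.symm i, Set.eq_singleton_iff_unique_mem.mpr ⟨⟨.rfl, (e.symm i).2⟩, ?_⟩⟩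
    rintro w ⟨hw, hwC⟩
    exact (hsep _ (e.symm i).2 w hwC hw).symm
  · refine Set.eq_empty_iff_forall_notMem.mpr ?_
    rintro w ⟨hi, hj⟩
    refine hij (e.symm.injective (Subtype.ext ?_))
    exact hsep _ (e.symm i).2 _ (e.symm j).2 (hi.trans hj.symm)
  · have hcover' : ∀ w, ∃ i, H.Reachable (e.symm i) w := fun w => by
      obtain ⟨z, hz, hzw⟩ := hcover w
      exact ⟨e ⟨z, hz⟩, by simpa using hzw⟩
    refine top_le_iff.mp ⟨fun w _ => ?_, fun a b hab => ?_⟩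
    · obtain ⟨i, hi⟩ := hcover' w
      rw [SimpleGraph.Subgraph.verts_sup, SimpleGraph.Subgraph.verts_iSup]
      exact Or.inr (Set.mem_iUnion.mpr ⟨i, hi⟩)
    · rw [SimpleGraph.Subgraph.sup_adj, SimpleGraph.Subgraph.iSup_adj]
      by_cases hC : C.Adj a b
      · exact Or.inl hC
      · obtain ⟨i, hi⟩ := hcover' a
        exact Or.inr ⟨i, SimpleGraph.deleteEdges_adj.mpr ⟨hab, hC⟩, hi⟩

end
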